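/- arXiv:math/0012215 — 5 statements merged into one kernel-verified Lean document; each statement's English description precedes it below -/
import Mathlib

section
/- For every natural number n ≥ 1, the polynomial φ_n(t) = ∏_{k=1}^{n-1}(1 + k·t²) − ∏_{k=1}^{n}(1 + t² + t⁴ + ⋯ + t^{2(k-1)}) is divisible by 1 − t⁴ in the polynomial ring ℤ[t]. -/
open Polynomial Finset

/-!
Put `x = t²` and write `[k] = 1 + x + ⋯ + x^(k-1)`. Multiplying the two products by their next
factors changes the difference `P - Q` into
`(P - Q) * (1 + n * x) + Q * ((1 + n * x) - [n + 1])`, with `Q = [1] * ⋯ * [n]`.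
At `x = 1` both new factors equal `n + 1`, so `1 - x` divides the last bracket, while
`1 + x = [2]` divides `Q` once `n ≥ 2`; for `n ≤ 1` the bracket vanishes. Hence `1 - x ^ 2`
divides `Q * ((1 + n * x) - [n + 1])` for every `n`.
-/

section CommRing

variable {R : Type*} [CommRing R] (x : R)

theorem one_add_mul_sub_geom_sum (n : ℕ) :
    1 + n * x - ∑ j ∈ range (n + 1), x ^ j = ∑ j ∈ range n, x * (1 - x ^ j) := by
  rw [geom_sum_succ, ← mul_sum, sum_sub_distrib, sum_const, card_range, nsmul_one]
  ring

theorem one_sub_dvd_one_add_mul_sub_geom_sum (n : ℕ) :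
    1 - x ∣ 1 + n * x - ∑ j ∈ range (n + 1), x ^ j := by
  rw [one_add_mul_sub_geom_sum]
  exact dvd_sum fun j _ ↦ (one_sub_dvd_one_sub_pow x j).mul_left x

theorem one_add_dvd_prod_geom_sum {n : ℕ} (hn : 2 ≤ n) :
    1 + x ∣ ∏ k ∈ Icc 1 n, ∑ j ∈ range k, x ^ j := by
  have geom_sum_two_eq : ∑ j ∈ range 2, x ^ j = 1 + x := by rw [geom_sum_two, add_comm]
  rw [← geom_sum_two_eq]
  exact dvd_prod_of_mem (fun k ↦ ∑ j ∈ range k, x ^ j) (mem_Icc.mpr ⟨one_le_two, hn⟩)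

theorem one_sub_sq_dvd_prod_geom_sum_mul (n : ℕ) :
    1 - x ^ 2 ∣ (∏ k ∈ Icc 1 n, ∑ j ∈ range k, x ^ j) *
      (1 + n * x - ∑ j ∈ range (n + 1), x ^ j) := by
  rcases lt_or_ge n 2 with n_lt_two | two_le_n
  · have bracket_eq_zero : 1 + n * x - ∑ j ∈ range (n + 1), x ^ j = 0 := by
      interval_cases n <;> simp [sum_range_succ]
    rw [bracket_eq_zero, mul_zero]
    exact dvd_zero _
  · have one_sub_sq : 1 - x ^ 2 = (1 + x) * (1 - x) := by ring
    rw [one_sub_sq]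
    exact mul_dvd_mul (one_add_dvd_prod_geom_sum x two_le_n)
      (one_sub_dvd_one_add_mul_sub_geom_sum x n)

theorem phi_divisible_by_one_sub_t4_general (n : ℕ) :
    1 - x ^ 2 ∣ (∏ k ∈ Icc 1 n, (1 + k * x)) -
      ∏ k ∈ Icc 1 (n + 1), ∑ j ∈ range k, x ^ j := by
  induction n with
  | zero => simp
  | succ n ih =>
    rw [prod_Icc_succ_top (Nat.le_add_left 1 n), prod_Icc_succ_top (Nat.le_add_left 1 (n + 1))]
    have dvd_increment := one_sub_sq_dvd_prod_geom_sum_mul x (n + 1)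
    convert dvd_add (ih.mul_right (1 + (n + 1 : ℕ) * x)) dvd_increment using 1
    ring

end CommRing

/-- For every `n ≥ 1`, the difference
`φ_n(t) = ∏_{k=1}^{n-1} (1 + k t²) - ∏_{k=1}^{n} (1 + t² + ⋯ + t^{2(k-1)})`
of the Poincaré polynomials of the configuration space `C_n(ℝ³)` and the flag
manifold `U(n)/Tⁿ` is divisible by `1 - t⁴` in `ℤ[t]`. -/
theorem phi_divisible_by_one_sub_t4 (n : ℕ) (hn : 1 ≤ n) :
    (1 - X ^ 4 : Polynomial ℤ) ∣
      ((∏ k ∈ Finset.Icc 1 (n - 1), (1 + (k : Polynomial ℤ) * X ^ 2)) -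
        ∏ k ∈ Finset.Icc 1 n, (∑ j ∈ Finset.range k, (X : Polynomial ℤ) ^ (2 * j))) := by
  have one_sub_sq_dvd := phi_divisible_by_one_sub_t4_general (X ^ 2 : ℤ[X]) (n - 1)
  simpa only [← pow_mul, Nat.reduceMul, Nat.sub_add_cancel hn] using one_sub_sq_dvd
end

section
/- For every natural number n ≥ 1, there exists a polynomial ψ_n(t) ∈ ℤ[t], all of whose coefficients are non-negative, such that φ_n(t) = (1 − t⁴)·ψ_n(t) in ℤ[t]. -/
open Polynomial Finset

/-!
Put `y = t²` and `[k] = 1 + y + ⋯ + y ^ (k - 1)`. Raising `n` by one multiplies the two products by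
`1 + n y` and by `[n + 1]`, so the new difference is `1 + n y` times the old one, plus
`[1] ⋯ [n] * (1 + n y - [n + 1])`. In this last term the second factor is
`∑ i < n, y (1 - y ^ i) = (1 - y) y ∑ i < n, [i]`, while the first contains `[2] = 1 + y` as soon as
`n ≥ 2`. Together they supply the factor `1 - y²`, and every cofactor is a polynomial in `y` with
natural number coefficients.
-/

theorem one_add_natCast_mul_sub_geom_sum {A : Type*} [Ring A] (y : A) (n : ℕ) :
    1 + (n : A) * y - ∑ j ∈ range (n + 1), y ^ j =
      (1 - y) * (y * ∑ i ∈ range n, ∑ j ∈ range i, y ^ j) := by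
  have commute_one_sub : (1 - y) * y = y * (1 - y) := by noncomm_ring
  calc 1 + (n : A) * y - ∑ j ∈ range (n + 1), y ^ j
      = y * ∑ i ∈ range n, (1 - y ^ i) := by
        simp only [sum_range_succ', pow_succ', ← mul_sum, pow_zero, sum_sub_distrib, sum_const,
          card_range, nsmul_one, mul_sub, Nat.cast_comm]
        abel
    _ = y * ((1 - y) * ∑ i ∈ range n, ∑ j ∈ range i, y ^ j) := by
        simp only [mul_sum (range n), mul_neg_geom_sum]
    _ = (1 - y) * (y * ∑ i ∈ range n, ∑ j ∈ range i, y ^ j) := by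
        rw [← mul_assoc, ← commute_one_sub, mul_assoc]

theorem prod_Icc_one_geom_sum {A : Type*} [CommSemiring A] (y : A) {n : ℕ} (hn : 2 ≤ n) :
    ∏ k ∈ Icc 1 n, ∑ j ∈ range k, y ^ j = (1 + y) * ∏ k ∈ Icc 3 n, ∑ j ∈ range k, y ^ j := by
  rw [← mul_prod_Ioc_eq_prod_Icc (one_le_two.trans hn), ← Icc_succ_left_eq_Ioc]
  rw [← mul_prod_Ioc_eq_prod_Icc (by simpa using hn), ← Icc_succ_left_eq_Ioc]
  simp [sum_range_succ]

section Subsemiring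

variable {A : Type*} [CommRing A] {S : Subsemiring A} {y : A}

theorem exists_prod_geom_sum_mul_sub_eq (hy : y ∈ S) (n : ℕ) :
    ∃ R ∈ S, (∏ k ∈ Icc 1 n, ∑ j ∈ range k, y ^ j) *
      (1 + (n : A) * y - ∑ j ∈ range (n + 1), y ^ j) = (1 - y ^ 2) * R := by
  rcases lt_or_ge n 2 with hn | hn
  · refine ⟨0, S.zero_mem, ?_⟩
    interval_cases n <;> simp [sum_range_succ]
  · have geom_sum_mem (k : ℕ) : ∑ j ∈ range k, y ^ j ∈ S := sum_mem fun j _ => pow_mem hy j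
    refine ⟨(∏ k ∈ Icc 3 n, ∑ j ∈ range k, y ^ j) * (y * ∑ i ∈ range n, ∑ j ∈ range i, y ^ j),
      mul_mem (prod_mem fun k _ => geom_sum_mem k)
        (mul_mem hy (sum_mem fun i _ => geom_sum_mem i)), ?_⟩
    rw [prod_Icc_one_geom_sum y hn, one_add_natCast_mul_sub_geom_sum]
    ring

theorem phi_eq_one_sub_t4_mul_psi_general (hy : y ∈ S) (n : ℕ) :
    ∃ ψ ∈ S, ∏ k ∈ Icc 1 n, (1 + (k : A) * y) -
      ∏ k ∈ Icc 1 (n + 1), ∑ j ∈ range k, y ^ j = (1 - y ^ 2) * ψ := by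
  induction n with
  | zero => exact ⟨0, S.zero_mem, by simp⟩
  | succ n ih =>
    obtain ⟨ψ, hψ, hdiff⟩ := ih
    obtain ⟨R, hR, hstep⟩ := exists_prod_geom_sum_mul_sub_eq hy (n + 1)
    have factor_mem : 1 + ((n + 1 : ℕ) : A) * y ∈ S :=
      add_mem S.one_mem (mul_mem (natCast_mem S _) hy)
    refine ⟨(1 + ((n + 1 : ℕ) : A) * y) * ψ + R, add_mem (mul_mem factor_mem hψ) hR, ?_⟩
    rw [prod_Icc_succ_top (by lia), prod_Icc_succ_top (b := n + 1) (by lia)]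
    linear_combination (1 + ((n + 1 : ℕ) : A) * y) * hdiff + hstep

end Subsemiring

theorem mem_lifts_natCast_iff_coeff_nonneg {p : ℤ[X]} :
    p ∈ lifts (Nat.castRingHom ℤ) ↔ ∀ i, 0 ≤ p.coeff i := by
  simp [lifts_iff_coeff_lifts, Nat.range_cast_int]

/-- For every `n ≥ 1` there is a polynomial `ψ_n(t) ∈ ℤ[t]` with non-negative
coefficients such that
`∏_{k=1}^{n-1} (1 + k t²) - ∏_{k=1}^{n} (1 + t² + ⋯ + t^{2(k-1)}) = (1 - t⁴) ψ_n(t)`. -/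
theorem phi_eq_one_sub_t4_mul_psi (n : ℕ) (hn : 1 ≤ n) :
    ∃ ψ : Polynomial ℤ, (∀ i, 0 ≤ ψ.coeff i) ∧
      ((∏ k ∈ Finset.Icc 1 (n - 1), (1 + (k : Polynomial ℤ) * X ^ 2)) -
          ∏ k ∈ Finset.Icc 1 n, (∑ j ∈ Finset.range k, (X : Polynomial ℤ) ^ (2 * j)))
        = (1 - X ^ 4) * ψ := by
  simpa only [mem_lifts_natCast_iff_coeff_nonneg, Nat.sub_add_cancel hn, ← pow_mul]
    using phi_eq_one_sub_t4_mul_psi_general (X_pow_mem_lifts (Nat.castRingHom ℤ) 2) (n - 1)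
end

section
/- For every natural number n, the topological space C_n(ℝ) = {x : Fin n → ℝ | x is injective}, with the subspace topology from ℝⁿ, has exactly n! connected components. -/
/-!
Along a connected set of configurations no two coordinates can cross, so the relative order of the
coordinates is constant there. Conversely, the configurations with a prescribed relative order form
a convex set. Components therefore correspond to the orderings of the labels, that is, to the
bijections from the set of labels to an initial segment of `ℕ`.
-/

theorem exists_equiv_fin_lt_iff_lt {ι α : Type*} [Finite ι] [LinearOrder α] {x : ι → α}
    (hx : Function.Injective x) :
    ∃ σ : ι ≃ Fin (Nat.card ι), ∀ i j, σ i < σ j ↔ x i < x j := by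
  have := Fintype.ofFinite (Set.range x)
  have card_range : Fintype.card (Set.range x) = Nat.card ι := by
    rw [← Nat.card_eq_fintype_card, Nat.card_range_of_injective hx]
  let rank : Set.range x ≃o Fin (Nat.card ι) := (Fintype.orderIsoFinOfCardEq _ card_range).symm
  exact ⟨(Equiv.ofInjective x hx).trans rank.toEquiv, fun i j ↦ rank.lt_iff_lt⟩

theorem equiv_eq_of_lt_iff_lt {ι α : Type*} [LinearOrder α] [WellFoundedLT α] {σ τ : ι ≃ α}
    (h : ∀ i j, σ i < σ j ↔ τ i < τ j) : σ = τ := by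
  let transition : α ≃o α := OrderIso.ofRelIsoLT
    ⟨σ.symm.trans τ, fun {a b} ↦ by simpa using (h (σ.symm a) (σ.symm b)).symm⟩
  have transition_eq_refl : transition = OrderIso.refl α := Subsingleton.elim _ _
  ext i
  simpa [transition] using (DFunLike.congr_fun transition_eq_refl (σ i)).symm

theorem injective_of_forall_lt_imp_lt {ι α β : Type*} [LinearOrder α] [Preorder β] {x : ι → α}
    {z : ι → β} (hx : Function.Injective x) (h : ∀ i j, x i < x j → z i < z j) :
    Function.Injective z := by
  intro i j hz
  by_contra hij
  rcases (hx.ne hij).lt_or_gt with hlt | hgt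
  · exact (h i j hlt).ne hz
  · exact (h j i hgt).ne' hz

theorem convex_setOf_forall_lt {ι 𝕜 E : Type*} [Semiring 𝕜] [PartialOrder 𝕜] [AddCommGroup E]
    [PartialOrder E] [IsOrderedAddMonoid E] [Module 𝕜 E] [PosSMulStrictMono 𝕜 E]
    (r : ι → ι → Prop) : Convex 𝕜 {z : ι → E | ∀ i j, r i j → z i < z j} := by
  have convex_lt (i j : ι) : Convex 𝕜 {z : ι → E | z i < z j} := by
    let eval (k : ι) : (ι → E) →ₗ[𝕜] E := LinearMap.proj k
    simpa [eval] using convex_halfSpace_lt (eval i - eval j).isLinear 0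
  simp only [Set.ofPred_forall]
  exact convex_iInter fun i ↦ convex_iInter fun j ↦ convex_iInter fun _ ↦ convex_lt i j

/-- The ordered configuration space of distinct points of `α` labelled by `ι`, topologised as a
subspace of the product `ι → α`. -/
abbrev OrderedConfig (ι α : Type*) : Type _ := {x : ι → α // Function.Injective x}

namespace OrderedConfig

section OrderClosedTopology

variable {ι α : Type*} [LinearOrder α] [TopologicalSpace α] [OrderClosedTopology α]

theorem isClopen_setOf_lt (i j : ι) : IsClopen {x : OrderedConfig ι α | x.1 i < x.1 j} := by
  have continuous_eval (k : ι) : Continuous fun x : OrderedConfig ι α ↦ x.1 k :=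
    (continuous_apply k).comp continuous_subtype_val
  refine ⟨?_, isOpen_lt (continuous_eval i) (continuous_eval j)⟩
  rcases eq_or_ne i j with rfl | hij
  · simp
  · have lt_iff_le (x : OrderedConfig ι α) : x.1 i < x.1 j ↔ x.1 i ≤ x.1 j :=
      (x.2.ne hij).le_iff_lt.symm
    simpa only [lt_iff_le] using isClosed_le (continuous_eval i) (continuous_eval j)

theorem lt_iff_lt_of_coe_eq_coe {x y : OrderedConfig ι α}
    (h : (x : ConnectedComponents (OrderedConfig ι α)) = y) (i j : ι) :
    x.1 i < x.1 j ↔ y.1 i < y.1 j := by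
  have lt_of_coe_eq {u v : OrderedConfig ι α}
      (huv : (u : ConnectedComponents (OrderedConfig ι α)) = v) (hu : u.1 i < u.1 j) :
      v.1 i < v.1 j :=
    (isClopen_setOf_lt i j).connectedComponent_subset hu
      (ConnectedComponents.coe_eq_coe'.mp huv.symm)
  exact ⟨lt_of_coe_eq h, lt_of_coe_eq h.symm⟩

end OrderClosedTopology

variable {ι : Type*}

theorem isPreconnected_setOf_forall_lt (x : OrderedConfig ι ℝ) :
    IsPreconnected {y : OrderedConfig ι ℝ | ∀ i j, x.1 i < x.1 j → y.1 i < y.1 j} := by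
  let cell : Set (ι → ℝ) := {z | ∀ i j, x.1 i < x.1 j → z i < z j}
  have image_eq : Subtype.val '' (Subtype.val ⁻¹' cell : Set (OrderedConfig ι ℝ)) = cell :=
    Set.image_preimage_eq_of_subset fun z hz ↦ ⟨⟨z, injective_of_forall_lt_imp_lt x.2 hz⟩, rfl⟩
  have cell_preconnected : IsPreconnected cell := (convex_setOf_forall_lt _).isPreconnected
  exact Topology.IsInducing.subtypeVal.isPreconnected_image.mp (image_eq.symm ▸ cell_preconnected)

theorem coe_eq_coe_iff_lt_iff_lt {x y : OrderedConfig ι ℝ} :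
    (x : ConnectedComponents (OrderedConfig ι ℝ)) = y ↔
      ∀ i j, x.1 i < x.1 j ↔ y.1 i < y.1 j := by
  refine ⟨lt_iff_lt_of_coe_eq_coe, fun h ↦ ConnectedComponents.coe_eq_coe'.mpr ?_⟩
  exact x.isPreconnected_setOf_forall_lt.subset_connectedComponent
    (fun i j ↦ (h i j).mp) (fun _ _ ↦ id)

/-- The configuration placing the label `i` at the integer point `σ i`; these serve as
representatives of the connected components. -/
def ofEquivFin {n : ℕ} (σ : ι ≃ Fin n) : OrderedConfig ι ℝ :=
  ⟨fun i ↦ (σ i : ℕ), Nat.cast_injective.comp (Fin.val_injective.comp σ.injective)⟩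

theorem ofEquivFin_lt_iff {n : ℕ} (σ : ι ≃ Fin n) (i j : ι) :
    (ofEquivFin σ).1 i < (ofEquivFin σ).1 j ↔ σ i < σ j :=
  Nat.cast_lt

theorem bijective_coe_ofEquivFin [Finite ι] :
    Function.Bijective fun σ : ι ≃ Fin (Nat.card ι) ↦
      (ofEquivFin σ : ConnectedComponents (OrderedConfig ι ℝ)) := by
  constructor
  · intro σ τ h
    exact equiv_eq_of_lt_iff_lt fun i j ↦ by
      simpa only [ofEquivFin_lt_iff] using coe_eq_coe_iff_lt_iff_lt.mp h i j
  · intro c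
    obtain ⟨x, rfl⟩ := ConnectedComponents.surjective_coe c
    obtain ⟨σ, hσ⟩ := exists_equiv_fin_lt_iff_lt x.2
    exact ⟨σ, coe_eq_coe_iff_lt_iff_lt.mpr fun i j ↦ (ofEquivFin_lt_iff σ i j).trans (hσ i j)⟩

end OrderedConfig

theorem card_connectedComponents_config_real_general (ι : Type*) [Finite ι] :
    Nat.card (ConnectedComponents {x : ι → ℝ // Function.Injective x})
      = Nat.factorial (Nat.card ι) := by
  classical
  have := Fintype.ofFinite ι
  rw [← Nat.card_eq_of_bijective _ (OrderedConfig.bijective_coe_ofEquivFin (ι := ι)),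
    Nat.card_eq_fintype_card, Fintype.card_equiv (Finite.equivFin ι), Nat.card_eq_fintype_card]

/-- The ordered configuration space `C_n(ℝ) = {x : Fin n → ℝ | x injective}`
(with the subspace topology from `ℝⁿ`) has exactly `n!` connected components. -/
theorem card_connectedComponents_config_real (n : ℕ) :
    Nat.card (ConnectedComponents {x : Fin n → ℝ // Function.Injective x})
      = Nat.factorial n := by
  rw [card_connectedComponents_config_real_general, Nat.card_fin]
end

section
/- Let K be a field, V an n-dimensional K-vector space, f : V → V a linear endomorphism with n distinct eigenvalues in K, and let r₁, …, r_t be positive integers with r₁ + ⋯ + r_t = n. Then the number of f-invariant partial flags of type (r₁, …, r_t), i.e., chains 0 = V₀ ≤ V₁ ≤ ⋯ ≤ V_t = V of subspaces with dim Vᵢ − dim Vᵢ₋₁ = rᵢ and f(Vᵢ) ⊆ Vᵢ for all i, is exactly the multinomial coefficient n!/(r₁!·r₂!⋯r_t!). -/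
open Module

/-!
Let `b` be a basis of eigenvectors of `f` with distinct eigenvalues `μ j`. A Lagrange polynomial in
`f` isolates any single coordinate of a vector, so an invariant subspace contains `b j` as soon as
one of its elements has a nonzero `j`-th coordinate; hence it is spanned by the basis vectors it
contains. An invariant flag is therefore determined by recording, for each `j`, the step at which
`b j` enters. This identifies invariant flags of type `r` with functions `g : Fin n → Fin t` whose
fibers have cardinalities `r i`. These functions form a single orbit under permutations of `Fin n`,
with stabilizer of order `∏ i, (r i)!`, and the orbit-stabilizer theorem counts them.
-/

section FiberCardinalities

open Equiv MulAction

variable {α κ : Type*} [Finite α]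

theorem mem_orbit_domMulAct_perm_iff {g h : α → κ} :
    h ∈ orbit (Perm α)ᵈᵐᵃ g ↔ ∀ k, (h ⁻¹' {k}).ncard = (g ⁻¹' {k}).ncard := by
  constructor
  · rintro ⟨σ, rfl⟩ k
    exact Nat.card_congr ((DomMulAct.mk.symm σ).subtypeEquiv fun _ ↦ Iff.rfl)
  · intro hcard
    let fiberEquiv (k : κ) : h ⁻¹' {k} ≃ g ⁻¹' {k} := (Finite.card_eq.mp (hcard k)).some
    exact ⟨DomMulAct.mk (ofPreimageEquiv fiberEquiv), funext (ofPreimageEquiv_map fiberEquiv)⟩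

variable [Fintype κ]

theorem card_stabilizer_domMulAct_perm (g : α → κ) :
    Nat.card (stabilizer (Perm α)ᵈᵐᵃ g) = ∏ k, (g ⁻¹' {k}).ncard.factorial :=
  calc Nat.card (stabilizer (Perm α)ᵈᵐᵃ g)
      = {σ : Perm α | g ∘ σ = g}.ncard :=
        Nat.card_congr (DomMulAct.mk.symm.subtypeEquiv fun _ ↦ DomMulAct.mem_stabilizer_iff)
    _ = ∏ k, (g ⁻¹' {k}).ncard.factorial := DomMulAct.stabilizer_ncard g

theorem exists_forall_ncard_fiber_eq {r : κ → ℕ} (hr : ∑ k, r k = Nat.card α) :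
    ∃ g : α → κ, ∀ k, (g ⁻¹' {k}).ncard = r k := by
  obtain ⟨e⟩ : Nonempty (α ≃ Σ k, Fin (r k)) := Finite.card_eq.mp (by simp [← hr])
  refine ⟨fun a ↦ (e a).1, fun k ↦ ?_⟩
  calc ((fun a ↦ (e a).1) ⁻¹' {k}).ncard
      = Nat.card {x : Σ k, Fin (r k) // x.1 = k} :=
        Nat.card_congr (e.subtypeEquiv fun _ ↦ Iff.rfl)
    _ = Nat.card (Fin (r k)) := Nat.card_congr (sigmaSubtype k)
    _ = r k := Nat.card_fin _

theorem ncard_setOf_forall_ncard_fiber_eq {r : κ → ℕ} (hr : ∑ k, r k = Nat.card α) :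
    {g : α → κ | ∀ k, (g ⁻¹' {k}).ncard = r k}.ncard = Nat.multinomial Finset.univ r := by
  obtain ⟨g, hg⟩ := exists_forall_ncard_fiber_eq hr
  have orbit_eq : orbit (Perm α)ᵈᵐᵃ g = {h | ∀ k, (h ⁻¹' {k}).ncard = r k} := by
    ext h
    simp only [mem_orbit_domMulAct_perm_iff, hg, Set.mem_ofPred_eq]
  have orbit_stabilizer :
      (∏ k, (r k).factorial) * {h : α → κ | ∀ k, (h ⁻¹' {k}).ncard = r k}.ncard =
        (∑ k, r k).factorial :=
    calc (∏ k, (r k).factorial) * {h : α → κ | ∀ k, (h ⁻¹' {k}).ncard = r k}.ncard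
        = Nat.card (stabilizer (Perm α)ᵈᵐᵃ g) * (stabilizer (Perm α)ᵈᵐᵃ g).index := by
          simp only [card_stabilizer_domMulAct_perm, hg, index_stabilizer, orbit_eq]
      _ = Nat.card (Perm α)ᵈᵐᵃ := Subgroup.card_mul_index _
      _ = (∑ k, r k).factorial := by rw [Nat.card_congr DomMulAct.mk.symm, Nat.card_perm, hr]
  exact (Nat.div_eq_of_eq_mul_right (Finset.prod_pos fun k _ ↦ (r k).factorial_pos)
    orbit_stabilizer.symm).symm

end FiberCardinalities

section Eigenbasis

variable {ι K V : Type*} [Field K] [AddCommGroup V] [Module K V]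
  {f : End K V} {μ : ι → K} {b : Basis ι K V} {W : Submodule K V}

open Polynomial in
theorem aeval_lagrangeBasis_apply [DecidableEq ι] (hμ : Function.Injective μ)
    (hb : ∀ j, f (b j) = μ j • b j) {x : V} {i : ι} (hi : i ∈ (b.repr x).support) :
    aeval f (Lagrange.basis (b.repr x).support μ i) x = b.repr x i • b i := by
  set p := Lagrange.basis (b.repr x).support μ i
  calc aeval f p x
      = ∑ j ∈ (b.repr x).support, b.repr x j • aeval f p (b j) := by
        conv_lhs => rw [← b.linearCombination_repr x, Finsupp.linearCombination_apply]
        simp only [Finsupp.sum, map_sum, map_smul]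
    _ = ∑ j ∈ (b.repr x).support, b.repr x j • p.eval (μ j) • b j := by
        simp only [End.aeval_apply_of_mem_apply_eq_smul (hb _)]
    _ = b.repr x i • p.eval (μ i) • b i :=
        Finset.sum_eq_single_of_mem i hi fun j hj hji ↦ by
          rw [Lagrange.eval_basis_of_ne hji.symm hj, zero_smul, smul_zero]
    _ = b.repr x i • b i := by rw [Lagrange.eval_basis_self hμ.injOn hi, one_smul]

theorem mem_of_mem_invtSubmodule_of_repr_ne_zero (hμ : Function.Injective μ)
    (hb : ∀ j, f (b j) = μ j • b j) (hW : W ∈ f.invtSubmodule) {x : V} (hx : x ∈ W) {i : ι}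
    (hi : b.repr x i ≠ 0) : b i ∈ W := by
  classical
  rw [← W.smul_mem_iff hi, ← aeval_lagrangeBasis_apply hμ hb (Finsupp.mem_support_iff.mpr hi)]
  exact Polynomial.aeval_apply_smul_mem_of_le_comap hx _ f hW

theorem span_image_setOf_mem_eq_of_mem_invtSubmodule (hμ : Function.Injective μ)
    (hb : ∀ j, f (b j) = μ j • b j) (hW : W ∈ f.invtSubmodule) :
    Submodule.span K (b '' {j | b j ∈ W}) = W := by
  apply le_antisymm
  · exact Submodule.span_le.mpr (Set.image_subset_iff.mpr fun _ hj ↦ hj)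
  · intro x hx
    exact b.mem_span_image.mpr fun i hi ↦
      mem_of_mem_invtSubmodule_of_repr_ne_zero hμ hb hW hx (Finsupp.mem_support_iff.mp hi)

end Eigenbasis

theorem span_image_mem_invtSubmodule {ι R M : Type*} [CommSemiring R] [AddCommMonoid M]
    [Module R M] {f : End R M} {μ : ι → R} {v : ι → M} (hv : ∀ j, f (v j) = μ j • v j)
    (s : Set ι) : Submodule.span R (v '' s) ∈ f.invtSubmodule := by
  rw [End.mem_invtSubmodule, Submodule.span_le]
  rintro _ ⟨j, hj, rfl⟩
  rw [SetLike.mem_coe, Submodule.mem_comap, hv]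
  exact Submodule.smul_mem _ _ (Submodule.subset_span ⟨j, hj, rfl⟩)

theorem finrank_span_image_eq_ncard {ι R M : Type*} [Semiring R] [StrongRankCondition R]
    [AddCommMonoid M] [Module R M] {v : ι → M} {s : Set ι} (hs : LinearIndepOn R v s) :
    finrank R (Submodule.span R (v '' s)) = s.ncard := by
  rw [finrank, ← Cardinal.toNat_toENat, toENat_rank_span_set hs, Set.ncard_def]

theorem exists_castSucc_lt_iff {t : ℕ} {p : Fin (t + 1) → Prop} (hp : Monotone p)
    (h_zero : ¬ p 0) (h_last : p (Fin.last t)) : ∃ k : Fin t, ∀ i, k.castSucc < i ↔ p i := by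
  obtain ⟨m, hm⟩ := (Set.toFinite {i | p i}).exists_minimal ⟨_, h_last⟩
  obtain ⟨k, rfl⟩ := Fin.exists_succ_eq.mpr fun h : m = 0 ↦ h_zero (h ▸ hm.prop)
  refine ⟨k, fun i ↦ Fin.castSucc_lt_iff_succ_le.trans ⟨fun hki ↦ hp hki hm.prop, fun hi ↦ ?_⟩⟩
  exact (le_total _ _).elim id (hm.le_of_le hi)

/-- The chain of coordinate subspaces attached to `g : ι → Fin t`, in which the basis vector `b j`
enters at the step from index `g j` to index `g j + 1`. These are the candidates for the flags
invariant under an endomorphism that is diagonal in `b`. -/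
def coordinateFlag {ι R M : Type*} [Semiring R] [AddCommMonoid M] [Module R M] (b : Basis ι R M)
    {t : ℕ} (g : ι → Fin t) (i : Fin (t + 1)) : Submodule R M :=
  Submodule.span R (b '' {j | (g j).castSucc < i})

section CoordinateFlag

variable {ι R M : Type*} [Semiring R] [AddCommMonoid M] [Module R M] (b : Basis ι R M) {t : ℕ}

theorem monotone_coordinateFlag (g : ι → Fin t) : Monotone (coordinateFlag b g) :=
  fun _ _ hi ↦ Submodule.span_mono (Set.image_mono fun _ hj ↦ lt_of_lt_of_le hj hi)

theorem coordinateFlag_zero (g : ι → Fin t) : coordinateFlag b g 0 = ⊥ := by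
  simp [coordinateFlag]

theorem coordinateFlag_last (g : ι → Fin t) : coordinateFlag b g (Fin.last t) = ⊤ := by
  simp [coordinateFlag, Fin.castSucc_lt_last]

section Finrank

variable [StrongRankCondition R]

theorem finrank_coordinateFlag (g : ι → Fin t) (i : Fin (t + 1)) :
    finrank R (coordinateFlag b g i) = {j | (g j).castSucc < i}.ncard :=
  finrank_span_image_eq_ncard (b.linearIndependent.linearIndepOn _)

theorem finrank_coordinateFlag_succ [Finite ι] (g : ι → Fin t) (i : Fin t) :
    finrank R (coordinateFlag b g i.succ) =
      finrank R (coordinateFlag b g i.castSucc) + (g ⁻¹' {i}).ncard := by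
  have entered_succ :
      {j | (g j).castSucc < i.succ} = {j | (g j).castSucc < i.castSucc} ∪ g ⁻¹' {i} := by
    ext j
    simp [le_iff_lt_or_eq]
  have disjoint_fiber : Disjoint {j | (g j).castSucc < i.castSucc} (g ⁻¹' {i}) :=
    Set.disjoint_left.mpr fun j hlt heq ↦ hlt.ne (congrArg Fin.castSucc heq)
  rw [finrank_coordinateFlag, finrank_coordinateFlag, entered_succ,
    Set.ncard_union_eq disjoint_fiber]

end Finrank

variable [Nontrivial R]

theorem basis_mem_coordinateFlag_iff {g : ι → Fin t} {i : Fin (t + 1)} {j : ι} :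
    b j ∈ coordinateFlag b g i ↔ (g j).castSucc < i :=
  b.self_mem_span_image

theorem injective_coordinateFlag :
    Function.Injective (coordinateFlag b : (ι → Fin t) → Fin (t + 1) → Submodule R M) := by
  intro g h hgh
  have entry_iff (j : ι) (i : Fin (t + 1)) : (g j).castSucc < i ↔ (h j).castSucc < i := by
    rw [← basis_mem_coordinateFlag_iff b, hgh, basis_mem_coordinateFlag_iff]
  funext j
  exact Fin.castSucc_injective t (eq_of_forall_gt_iff (entry_iff j))

end CoordinateFlag

section InvariantFlags

variable {K V : Type*} [Field K] [AddCommGroup V] [Module K V] {t : ℕ}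

/-- `F` is an `f`-invariant partial flag `0 = F 0 ≤ ⋯ ≤ F t = V` of type `r`: the objects to be
counted. The dimension jump `r i` is the one from `F i` to `F (i + 1)`. -/
structure IsInvariantPartialFlag (f : End K V) (r : Fin t → ℕ) (F : Fin (t + 1) → Submodule K V) :
    Prop where
  monotone : Monotone F
  zero : F 0 = ⊥
  last : F (Fin.last t) = ⊤
  finrank_succ (i : Fin t) : finrank K (F i.succ) = finrank K (F i.castSucc) + r i
  mem_invtSubmodule (i : Fin (t + 1)) : F i ∈ f.invtSubmodule

variable {ι : Type*} {f : End K V} {μ : ι → K} {b : Basis ι K V}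

theorem exists_coordinateFlag_eq (hμ : Function.Injective μ) (hb : ∀ j, f (b j) = μ j • b j)
    {F : Fin (t + 1) → Submodule K V} (hF : Monotone F) (h_zero : F 0 = ⊥)
    (h_last : F (Fin.last t) = ⊤) (hf : ∀ i, F i ∈ f.invtSubmodule) :
    ∃ g : ι → Fin t, coordinateFlag b g = F := by
  have exists_entry (j : ι) : ∃ k : Fin t, ∀ i, k.castSucc < i ↔ b j ∈ F i :=
    exists_castSucc_lt_iff (fun _ _ hi hj ↦ hF hi hj) (by simp [h_zero, b.ne_zero])
      (by simp [h_last])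
  choose g hg using exists_entry
  refine ⟨g, funext fun i ↦ ?_⟩
  simp only [coordinateFlag, hg]
  exact span_image_setOf_mem_eq_of_mem_invtSubmodule hμ hb (hf i)

theorem setOf_isInvariantPartialFlag_eq_image [Finite ι] (hμ : Function.Injective μ)
    (hb : ∀ j, f (b j) = μ j • b j) (r : Fin t → ℕ) :
    {F | IsInvariantPartialFlag f r F} =
      coordinateFlag b '' {g | ∀ i, (g ⁻¹' {i}).ncard = r i} := by
  ext F
  constructor
  · intro hF
    obtain ⟨g, rfl⟩ := exists_coordinateFlag_eq hμ hb hF.monotone hF.zero hF.last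
      hF.mem_invtSubmodule
    refine ⟨g, fun i ↦ ?_, rfl⟩
    exact Nat.add_left_cancel ((finrank_coordinateFlag_succ b g i).symm.trans (hF.finrank_succ i))
  · rintro ⟨g, hg, rfl⟩
    exact {
      monotone := monotone_coordinateFlag b g
      zero := coordinateFlag_zero b g
      last := coordinateFlag_last b g
      finrank_succ := fun i ↦ by rw [finrank_coordinateFlag_succ, hg i]
      mem_invtSubmodule := fun i ↦ span_image_mem_invtSubmodule hb _ }

end InvariantFlags

/-- If `f` is a linear endomorphism of an `n`-dimensional `K`-vector space with
`n` distinct eigenvalues, and `r₁ + ⋯ + r_t = n` with each `rᵢ > 0`, then the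
number of `f`-invariant partial flags of type `(r₁, …, r_t)` is exactly the
multinomial coefficient `n! / (r₁! ⋯ r_t!)`. -/
theorem card_invariant_partial_flags
    (K V : Type*) [Field K] [AddCommGroup V] [Module K V] [FiniteDimensional K V]
    (n : ℕ) (hdim : Module.finrank K V = n)
    (f : V →ₗ[K] V)
    (μ : Fin n → K) (hμ : Function.Injective μ)
    (v : Fin n → V) (hv : ∀ i, v i ≠ 0) (hev : ∀ i, f (v i) = μ i • v i)
    (t : ℕ) (r : Fin t → ℕ) (hr : ∀ i, 0 < r i) (hsum : ∑ i, r i = n) :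
    Nat.card {F : Fin (t + 1) → Submodule K V //
        Monotone F ∧ F 0 = ⊥ ∧ F (Fin.last t) = ⊤ ∧
        (∀ i : Fin t,
          Module.finrank K (F i.succ) = Module.finrank K (F i.castSucc) + r i) ∧
        (∀ i : Fin (t + 1), ∀ x ∈ F i, f x ∈ F i)}
      = Nat.factorial n / ∏ i, Nat.factorial (r i) := by
  have eigenvector (i : Fin n) : End.HasEigenvector f (μ i) (v i) :=
    ⟨End.mem_eigenspace_iff.mpr (hev i), hv i⟩
  have independent : LinearIndependent K v :=
    End.eigenvectors_linearIndependent' f μ hμ v eigenvector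
  obtain ⟨b, rfl⟩ : ∃ b : Basis (Fin n) K V, b = v :=
    ⟨basisOfLinearIndependentOfCardEqFinrank' v independent (by simp [hdim]), by simp⟩
  calc Nat.card _
      = {F | IsInvariantPartialFlag f r F}.ncard :=
        Nat.card_congr (Equiv.subtypeEquivRight fun F ↦
          ⟨fun ⟨hmono, hzero, hlast, hrank, hinv⟩ ↦ ⟨hmono, hzero, hlast, hrank, hinv⟩,
            fun ⟨hmono, hzero, hlast, hrank, hinv⟩ ↦ ⟨hmono, hzero, hlast, hrank, hinv⟩⟩)
    _ = {g : Fin n → Fin t | ∀ i, (g ⁻¹' {i}).ncard = r i}.ncard := by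
        rw [setOf_isInvariantPartialFlag_eq_image hμ hev,
          Set.ncard_image_of_injective _ (injective_coordinateFlag b)]
    _ = Nat.multinomial Finset.univ r := ncard_setOf_forall_ncard_fiber_eq (by simpa using hsum)
    _ = Nat.factorial n / ∏ i, Nat.factorial (r i) := by rw [Nat.multinomial, hsum]
end

section
/- Let r, s be natural numbers and n = r + s. The quotient of the topological space X = {(x, y) : (Fin r → ℝ) × (Fin s → ℝ) | x i ≠ y j for all i, j} by the action of Perm(Fin r) × Perm(Fin s) permuting the coordinates of x and of y has exactly n!/(r!·s!) = C(n, r) connected components. -/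
/-- The space of pairs of tuples `(x, y) ∈ ℝʳ × ℝˢ` with `xᵢ ≠ y_j` for all
`i, j` (with the subspace topology from the product). -/
abbrev TwoGroupConfig (r s : ℕ) : Type :=
  {p : (Fin r → ℝ) × (Fin s → ℝ) // ∀ i j, p.1 i ≠ p.2 j}

/-- The action of `Perm (Fin r) × Perm (Fin s)` permuting the coordinates of
`x` and of `y`. -/
instance twoGroupConfigSMul (r s : ℕ) :
    SMul (Equiv.Perm (Fin r) × Equiv.Perm (Fin s)) (TwoGroupConfig r s) where
  smul g p := ⟨(p.1.1 ∘ ⇑g.1⁻¹, p.1.2 ∘ ⇑g.2⁻¹), fun _ _ => p.2 _ _⟩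

instance twoGroupConfigMulAction (r s : ℕ) :
    MulAction (Equiv.Perm (Fin r) × Equiv.Perm (Fin s)) (TwoGroupConfig r s) where
  one_smul p := by
    apply Subtype.ext
    show (p.1.1 ∘ ⇑(1 : Equiv.Perm (Fin r))⁻¹, p.1.2 ∘ ⇑(1 : Equiv.Perm (Fin s))⁻¹) = p.1
    simp [Function.comp_def]
  mul_smul g h p := by
    apply Subtype.ext
    show (p.1.1 ∘ ⇑(g.1 * h.1)⁻¹, p.1.2 ∘ ⇑(g.2 * h.2)⁻¹)
      = ((p.1.1 ∘ ⇑h.1⁻¹) ∘ ⇑g.1⁻¹, (p.1.2 ∘ ⇑h.2⁻¹) ∘ ⇑g.2⁻¹)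
    simp [Function.comp_def]

/-- The unordered two-group configuration space `C_{r,s}(ℝ)`: the quotient of
`TwoGroupConfig r s` by the permutation action of `Σ_r × Σ_s`, with the
quotient topology. -/
abbrev TwoGroupConfigQuot (r s : ℕ) : Type :=
  Quotient (MulAction.orbitRel (Equiv.Perm (Fin r) × Equiv.Perm (Fin s)) (TwoGroupConfig r s))

/-!
Permuting the `x`'s and the `y`'s leaves only one invariant of the relative order of the two
groups: the multiset recording, for each `xᵢ`, how many `y`'s lie to its left. It is locally
constant because no `xᵢ` can cross a `y_j`. Its fibres in the quotient are connected: after sorting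
the `y`'s and matching the `x`'s, the order relations between the two groups are prescribed, and
these cut out a convex set. So the components correspond to the multisets of size `r` in
`{0, …, s}`.
-/

open Finset Topology

section General

theorem card_connectedComponents_eq_of_isConnected_fiber {X Y : Type*} [TopologicalSpace X]
    {f : X → Y} (hf : IsLocallyConstant f) (hfiber : ∀ y, IsConnected (f ⁻¹' {y})) :
    Nat.card (ConnectedComponents X) = Nat.card Y := by
  let _ : TopologicalSpace Y := ⊥
  have : DiscreteTopology Y := ⟨rfl⟩
  have hinj : Function.Injective hf.continuous.connectedComponentsLift := by
    refine ConnectedComponents.surjective_coe.forall₂.2 fun a b hab => ?_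
    exact ConnectedComponents.coe_eq_coe'.2
      ((hfiber (f b)).isPreconnected.subset_connectedComponent rfl hab)
  have hsurj : Function.Surjective hf.continuous.connectedComponentsLift := fun y =>
    let ⟨x, hx⟩ := (hfiber y).nonempty
    ⟨x, hx⟩
  exact Nat.card_congr (Equiv.ofBijective _ ⟨hinj, hsurj⟩)

theorem eventually_lt_iff_lt_of_ne {X α : Type*} [TopologicalSpace X] [TopologicalSpace α]
    [LinearOrder α] [OrderClosedTopology α] {f g : X → α} {x : X} (hf : ContinuousAt f x)
    (hg : ContinuousAt g x) (hne : f x ≠ g x) : ∀ᶠ z in 𝓝 x, f z < g z ↔ f x < g x := by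
  rcases hne.lt_or_gt with hlt | hgt
  · filter_upwards [hf.eventually_lt hg hlt] with z hz
    exact iff_of_true hz hlt
  · filter_upwards [hg.eventually_lt hf hgt] with z hz
    exact iff_of_false hz.not_gt hgt.not_gt

variable {𝕜 : Type*} [Field 𝕜] [LinearOrder 𝕜] [IsStrictOrderedRing 𝕜]

theorem convex_setOf_linearMap_lt {E : Type*} [AddCommGroup E] [Module 𝕜 E] (f g : E →ₗ[𝕜] 𝕜) :
    Convex 𝕜 {x | f x < g x} := by
  simpa only [LinearMap.sub_apply, sub_neg] using convex_halfSpace_lt (f - g).isLinear 0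

theorem convex_setOf_order_pattern {ι κ : Type*} (P : ι → κ → Prop) :
    Convex 𝕜 {q : (ι → 𝕜) × (κ → 𝕜) |
      ∀ i j, (P i j → q.2 j < q.1 i) ∧ (¬P i j → q.1 i < q.2 j)} := by
  let x (i : ι) : (ι → 𝕜) × (κ → 𝕜) →ₗ[𝕜] 𝕜 := .proj i ∘ₗ .fst 𝕜 _ _
  let y (j : κ) : (ι → 𝕜) × (κ → 𝕜) →ₗ[𝕜] 𝕜 := .proj j ∘ₗ .snd 𝕜 _ _
  simp only [Set.ofPred_forall]
  refine convex_iInter fun i => convex_iInter fun j => ?_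
  by_cases hP : P i j
  · simpa [hP, x, y] using convex_setOf_linearMap_lt (y j) (x i)
  · simpa [hP, x, y] using convex_setOf_linearMap_lt (x i) (y j)

variable {ι α : Type*} [Fintype ι]

theorem map_univ_val_comp_perm (f : ι → α) (σ : Equiv.Perm ι) :
    univ.val.map (f ∘ σ) = univ.val.map f := by
  rw [← Multiset.map_map, Multiset.map_univ_val_equiv]

theorem exists_perm_comp_eq_of_map_univ_val_eq {f g : ι → α}
    (h : univ.val.map f = univ.val.map g) : ∃ σ : Equiv.Perm ι, g ∘ σ = f := by
  classical
  have hcard (a : α) : Fintype.card {i // f i = a} = Fintype.card {i // g i = a} := by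
    simpa only [Multiset.count_map, ← Finset.filter_val, Finset.card_val, Fintype.card_subtype,
      eq_comm] using congrArg (Multiset.count a) h
  exact ⟨.ofFiberEquiv fun a => Fintype.equivOfCardEq (hcard a),
    funext (Equiv.ofFiberEquiv_map _)⟩

theorem exists_map_univ_val_eq_sym {n : ℕ} (m : Sym α n) :
    ∃ f : Fin n → α, univ.val.map f = (m : Multiset α) := by
  obtain ⟨⟨l⟩, rfl⟩ := m
  exact ⟨l.get, (Fin.univ_val_map l.get).trans (congrArg _ (List.ofFn_get l))⟩

end General

namespace TwoGroupConfig

variable {r s : ℕ}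

/-- The gap between the `y`'s that contains `xᵢ`, encoded as the number of `y`'s to the left of
`xᵢ`. -/
noncomputable def gap (p : TwoGroupConfig r s) (i : Fin r) : Fin (s + 1) :=
  ⟨#{j | p.1.2 j < p.1.1 i}, Nat.lt_succ_of_le (card_finset_fin_le _)⟩

/-- The multiset of gaps occupied by the `x`'s, the complete invariant of a connected component. -/
noncomputable def gaps (p : TwoGroupConfig r s) : Sym (Fin (s + 1)) r :=
  Sym.mk (univ.val.map p.gap) (by simp)

/-- The configurations whose order relations between the two groups are those of a configuration
with sorted `y`'s and with `xᵢ` in the gap `b i`; the `y`'s themselves need not be sorted. -/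
def chamber (b : Fin r → Fin (s + 1)) : Set (TwoGroupConfig r s) :=
  {p | ∀ i j, p.1.2 j < p.1.1 i ↔ (j : ℕ) < b i}

theorem gap_smul (g : Equiv.Perm (Fin r) × Equiv.Perm (Fin s)) (p : TwoGroupConfig r s) :
    (g • p).gap = p.gap ∘ ⇑g.1⁻¹ := by
  funext i
  simp only [gap, Function.comp_apply, Fin.mk.injEq]
  refine card_equiv g.2⁻¹ fun j => ?_
  simp only [mem_filter_univ]
  rfl

theorem gaps_smul (g : Equiv.Perm (Fin r) × Equiv.Perm (Fin s)) (p : TwoGroupConfig r s) :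
    (g • p).gaps = p.gaps :=
  Sym.ext <| (congrArg univ.val.map (gap_smul g p)).trans (map_univ_val_comp_perm _ _)

theorem isLocallyConstant_gaps : IsLocallyConstant (gaps : TwoGroupConfig r s → _) := by
  refine (IsLocallyConstant.iff_eventually_eq _).2 fun p => ?_
  have horder : ∀ᶠ q in 𝓝 p, ∀ i j, q.1.2 j < q.1.1 i ↔ p.1.2 j < p.1.1 i :=
    Filter.eventually_all.2 fun i => Filter.eventually_all.2 fun j =>
      eventually_lt_iff_lt_of_ne (f := fun q : TwoGroupConfig r s => q.1.2 j) (by fun_prop)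
        (by fun_prop) (p.2 i j).symm
  filter_upwards [horder] with q hq
  have hgap : q.gap = p.gap := funext fun i => Fin.ext (by simp only [gap, hq])
  exact Sym.ext (congrArg univ.val.map hgap)

theorem image_val_chamber (b : Fin r → Fin (s + 1)) :
    Subtype.val '' chamber b = {q : (Fin r → ℝ) × (Fin s → ℝ) | ∀ (i : Fin r) (j : Fin s),
      ((j : ℕ) < b i → q.2 j < q.1 i) ∧ (¬(j : ℕ) < b i → q.1 i < q.2 j)} := by
  ext q
  constructor
  · rintro ⟨p, hp, rfl⟩ i j
    exact ⟨(hp i j).2, fun hj => (p.2 i j).lt_of_le (not_lt.1 (mt (hp i j).1 hj))⟩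
  · intro hq
    refine ⟨⟨q, fun i j => ?_⟩, fun i j => ⟨fun hlt => ?_, (hq i j).1⟩, rfl⟩
    · by_cases hj : (j : ℕ) < b i
      · exact ((hq i j).1 hj).ne'
      · exact ((hq i j).2 hj).ne
    · exact not_imp_comm.1 (hq i j).2 hlt.not_gt

theorem isPreconnected_chamber (b : Fin r → Fin (s + 1)) : IsPreconnected (chamber b) := by
  refine IsInducing.subtypeVal.isPreconnected_image.1 ?_
  rw [image_val_chamber]
  exact (convex_setOf_order_pattern _).isPreconnected

theorem chamber_nonempty (b : Fin r → Fin (s + 1)) : (chamber b).Nonempty := by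
  have hlt (i : Fin r) (j : Fin s) : (j : ℝ) < (b i : ℕ) - 1 / 2 ↔ (j : ℕ) < b i := by
    constructor <;> intro h
    · exact_mod_cast (by linarith : ((j : ℕ) : ℝ) < (b i : ℕ))
    · have : ((j : ℕ) : ℝ) + 1 ≤ (b i : ℕ) := by exact_mod_cast h
      linarith
  have hne (i : Fin r) (j : Fin s) : ((b i : ℕ) : ℝ) - 1 / 2 ≠ (j : ℕ) := fun h => by
    have : 2 * (b i : ℕ) = 2 * (j : ℕ) + 1 := by
      exact_mod_cast (by linarith : 2 * ((b i : ℕ) : ℝ) = 2 * ((j : ℕ) : ℝ) + 1)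
    omega
  exact ⟨⟨(fun i => (b i : ℕ) - 1 / 2, fun j => (j : ℕ)), hne⟩, hlt⟩

theorem gap_eq_of_mem_chamber {b : Fin r → Fin (s + 1)} {p : TwoGroupConfig r s}
    (hp : p ∈ chamber b) : p.gap = b := by
  funext i
  apply Fin.ext
  have hb : (b i : ℕ) ≤ s := (b i).is_le
  simp only [gap, hp i, Fin.card_filter_val_lt, min_eq_right hb]

theorem mem_chamber_gap_of_monotone {p : TwoGroupConfig r s} (hp : Monotone p.1.2) :
    p ∈ chamber p.gap :=
  fun _ _ => (Tuple.lt_card_lt_iff_apply_lt_of_monotone hp).symm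

theorem exists_smul_mem_chamber {b : Fin r → Fin (s + 1)} {p : TwoGroupConfig r s}
    (h : univ.val.map p.gap = univ.val.map b) :
    ∃ g : Equiv.Perm (Fin r) × Equiv.Perm (Fin s), g • p ∈ chamber b := by
  obtain ⟨σ, hσ⟩ := exists_perm_comp_eq_of_map_univ_val_eq h.symm
  let g : Equiv.Perm (Fin r) × Equiv.Perm (Fin s) := (σ⁻¹, (Tuple.sort p.1.2)⁻¹)
  have hmono : Monotone (g • p).1.2 := Tuple.monotone_sort p.1.2
  have hgap : (g • p).gap = b := (gap_smul g p).trans hσ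
  exact ⟨g, hgap ▸ mem_chamber_gap_of_monotone hmono⟩

end TwoGroupConfig

namespace TwoGroupConfigQuot

variable {r s : ℕ}

/-- The multiset of gaps as a function on the unordered configuration space. -/
noncomputable def gaps : TwoGroupConfigQuot r s → Sym (Fin (s + 1)) r :=
  Quotient.lift TwoGroupConfig.gaps fun _ q ⟨g, hg⟩ => hg ▸ TwoGroupConfig.gaps_smul g q

theorem isLocallyConstant_gaps : IsLocallyConstant (gaps : TwoGroupConfigQuot r s → _) :=
  fun S => isQuotientMap_quotient_mk'.isOpen_preimage.1 (TwoGroupConfig.isLocallyConstant_gaps S)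

theorem gaps_fiber_eq_image_chamber {m : Sym (Fin (s + 1)) r} {b : Fin r → Fin (s + 1)}
    (hb : univ.val.map b = (m : Multiset (Fin (s + 1)))) :
    (gaps ⁻¹' {m} : Set (TwoGroupConfigQuot r s)) =
      Quotient.mk _ '' TwoGroupConfig.chamber b := by
  ext c
  constructor
  · induction c using Quotient.inductionOn with | h p
    intro hp
    obtain ⟨g, hg⟩ := TwoGroupConfig.exists_smul_mem_chamber
      ((congrArg Sym.toMultiset hp).trans hb.symm)
    exact ⟨g • p, hg, Quotient.sound ⟨g, rfl⟩⟩
  · rintro ⟨p, hp, rfl⟩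
    exact Sym.ext ((congrArg univ.val.map (TwoGroupConfig.gap_eq_of_mem_chamber hp)).trans hb)

theorem isConnected_gaps_fiber (m : Sym (Fin (s + 1)) r) :
    IsConnected (gaps ⁻¹' {m} : Set (TwoGroupConfigQuot r s)) := by
  obtain ⟨b, hb⟩ := exists_map_univ_val_eq_sym m
  have hchamber : IsConnected (TwoGroupConfig.chamber b) :=
    ⟨TwoGroupConfig.chamber_nonempty b, TwoGroupConfig.isPreconnected_chamber b⟩
  rw [gaps_fiber_eq_image_chamber hb]
  exact hchamber.image _ continuous_quotient_mk'.continuousOn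

end TwoGroupConfigQuot

/-- The configuration space `C_{r,s}(ℝ)` of two unordered groups of `r` and `s`
points on the real line (with coincidences allowed within each group, but no
point of one group equal to a point of the other) has exactly
`n!/(r!·s!) = C(n, r)` connected components, where `n = r + s`. -/
theorem card_connectedComponents_twoGroupConfig (r s : ℕ) :
    Nat.card (ConnectedComponents (TwoGroupConfigQuot r s))
      = Nat.factorial (r + s) / (Nat.factorial r * Nat.factorial s) := by
  calc
    Nat.card (ConnectedComponents (TwoGroupConfigQuot r s))
      = Nat.card (Sym (Fin (s + 1)) r) :=
        card_connectedComponents_eq_of_isConnected_fiber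
          TwoGroupConfigQuot.isLocallyConstant_gaps TwoGroupConfigQuot.isConnected_gaps_fiber
    _ = (s + 1 + r - 1).choose r := by
        rw [Nat.card_eq_fintype_card, Sym.card_sym_eq_choose, Fintype.card_fin]
    _ = (r + s).choose s := by
        rw [← Nat.choose_symm_add, Nat.add_right_comm, Nat.add_sub_cancel, Nat.add_comm]
    _ = Nat.factorial (r + s) / (Nat.factorial r * Nat.factorial s) := Nat.add_choose r s
end
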